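/- Composite rule for Wigner d-matrices (general cyclic case): let n ≥ 1, let ℓ₁, ℓ₂ be half-integer spins, let θ₁, …, θ_n ∈ ℝ, and let Δ₁, …, Δ_n be shifts with Δᵢ − (ℓ₁ + ℓ₂) ∈ ℤ for each i. Then, with the cyclic convention that index n+1 means 1, ∑_{ε₁, …, ε_n} ∏_{i=1}^{n} d^{ℓ₁}_{εᵢ, εᵢ₊₁}(θᵢ) · d^{ℓ₂}_{εᵢ+Δᵢ, εᵢ₊₁+Δᵢ₊₁}(θᵢ) = ∑_{s=|ℓ₁−ℓ₂|}^{ℓ₁+ℓ₂} ∏_{i=1}^{n} d^{s}_{Δᵢ, Δᵢ₊₁}(θᵢ), where each εᵢ ranges over {−ℓ₁, −ℓ₁+1, …, ℓ₁}, s increases in integer steps from |ℓ₁−ℓ₂| to ℓ₁+ℓ₂, and any d-matrix element whose magnetic indices lie outside the allowed range for its spin is zero by convention. -/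

import Mathlib

/-- The Wigner (small) d-matrix element `d^ℓ_{m,n}(θ)`, encoded via doubled indices:
`L = 2ℓ`, `M = 2m`, `N = 2n` (so that `ℓ ± m` and `ℓ ± n` are the integers
`(L ± M)/2`, `(L ± N)/2`).  It vanishes by convention when `|m| > ℓ` or `|n| > ℓ`. -/
noncomputable def wignerd (L M N : ℤ) (θ : ℝ) : ℝ :=
  if |M| ≤ L ∧ |N| ≤ L then
    Real.sqrt
      ((Nat.factorial ((L + M) / 2).toNat * Nat.factorial ((L - M) / 2).toNat *
        Nat.factorial ((L + N) / 2).toNat * Nat.factorial ((L - N) / 2).toNat : ℕ)) *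
    ∑ s ∈ Finset.Icc (max 0 ((N - M) / 2)) (min ((L + N) / 2) ((L - M) / 2)),
      (-1 : ℝ) ^ ((M - N) / 2 + s) *
        Real.cos (θ / 2) ^ (L + (N - M) / 2 - 2 * s) *
        Real.sin (θ / 2) ^ ((M - N) / 2 + 2 * s) /
        ((Nat.factorial ((L + N) / 2 - s).toNat * Nat.factorial s.toNat *
          Nat.factorial ((M - N) / 2 + s).toNat *
          Nat.factorial ((L - M) / 2 - s).toNat : ℕ))
  else 0

/-!
Up to conjugation by a diagonal matrix, which telescopes around the cycle, the Wigner matrix of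
spin `ℓ` is the `2ℓ`-th symmetric power of the rotation of the plane through `θ / 2`. The symmetry
`d^ℓ_{-m,-n} = (-1)^(m-n) d^ℓ_{m,n}` allows the first spin to carry the weights `-εᵢ`, so that
`-εᵢ + (εᵢ + Δᵢ) = Δᵢ` and the left side becomes the trace, on the tensor product of two symmetric
powers, of a cyclic product of rotations interleaved with the projections to total weight `Δᵢ`.
Multiplication of forms, whose kernel is the image of multiplication by the invariant
`y ⊗ x - x ⊗ y`, splits off the summand of spin `ℓ₁ + ℓ₂` and leaves the tensor product of
spins `ℓ₁ - 1 / 2` and `ℓ₂ - 1 / 2`. Both maps respect the weights, so by induction the trace is the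
sum of the traces on the summands of spin `s`. In each summand the weight `Δᵢ` occurs at most once,
which leaves a single product of Wigner matrix elements.
-/

open Finset Matrix Polynomial
open scoped Kronecker Nat

section Paths

variable {R ι κ μ : Type*} [CommSemiring R] [Fintype ι] [DecidableEq ι] [Fintype κ]
  [DecidableEq κ]

theorem prod_ofFn_apply {m : ℕ} (M : Fin (m + 1) → Matrix ι ι R) (a b : ι) :
    (List.ofFn M).prod a b = ∑ e : Fin m → ι, ∏ i : Fin (m + 1),
      M i ((Fin.cons a e : Fin (m + 1) → ι) i) ((Fin.snoc e b : Fin (m + 1) → ι) i) := by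
  induction m generalizing a with
  | zero => simp [List.ofFn_succ, Fin.snoc]
  | succ m ih =>
    rw [List.ofFn_succ, List.prod_cons, Matrix.mul_apply,
      ← (Fin.consEquiv fun _ : Fin (m + 1) => ι).sum_comp, Fintype.sum_prod_type]
    refine sum_congr rfl fun c _ => ?_
    rw [ih, mul_sum]
    refine sum_congr rfl fun e _ => ?_
    have hsnoc : (Fin.snoc (Fin.consEquiv (fun _ => ι) (c, e)) b : Fin (m + 2) → ι) =
        Fin.cons c (Fin.snoc e b : Fin (m + 1) → ι) :=
      (Fin.cons_snoc_eq_snoc_cons c e b).symm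
    simp only [Fin.prod_univ_succ (n := m + 1), hsnoc, Fin.consEquiv_apply, Fin.cons_zero,
      Fin.cons_succ]

theorem trace_prod_ofFn {n : ℕ} [NeZero n] (M : Fin n → Matrix ι ι R) :
    (List.ofFn M).prod.trace = ∑ e : Fin n → ι, ∏ i, M i (e i) (e (i + 1)) := by
  obtain ⟨m, rfl⟩ := Nat.exists_eq_succ_of_ne_zero (NeZero.ne n)
  rw [← (Fin.consEquiv fun _ : Fin (m + 1) => ι).sum_comp, Fintype.sum_prod_type]
  refine sum_congr rfl fun a _ => ?_
  rw [Matrix.diag_apply, prod_ofFn_apply]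
  refine sum_congr rfl fun e _ => prod_congr rfl fun i _ => ?_
  rw [Fin.consEquiv_apply]
  congr 1
  refine Fin.lastCases ?_ (fun i => ?_) i
  · simp
  · simp [Fin.coeSucc_eq_succ]

theorem prod_ofFn_mul_of_intertwines {n : ℕ} {S : Matrix ι κ R} {M : Fin n → Matrix ι ι R}
    {M' : Fin n → Matrix κ κ R} (h : ∀ i, M i * S = S * M' i) :
    (List.ofFn M).prod * S = S * (List.ofFn M').prod := by
  induction n with
  | zero => simp
  | succ n ih =>
    rw [List.ofFn_succ, List.ofFn_succ, List.prod_cons, List.prod_cons, Matrix.mul_assoc,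
      ih fun i => h i.succ, ← Matrix.mul_assoc, h, Matrix.mul_assoc]

theorem trace_eq_add_of_split_exact [Fintype μ] [DecidableEq μ]
    {I : Matrix ι κ R} {r : Matrix κ ι R} {p : Matrix μ ι R} {σ : Matrix ι μ R}
    (hrI : r * I = 1) (hpσ : p * σ = 1) (hsplit : I * r + σ * p = 1)
    {M : Matrix ι ι R} {M' : Matrix κ κ R} {M'' : Matrix μ μ R}
    (hI : M * I = I * M') (hp : M'' * p = p * M) : M.trace = M'.trace + M''.trace :=
  calc M.trace = (M * (I * r + σ * p)).trace := by rw [hsplit, Matrix.mul_one]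
    _ = (r * (M * I)).trace + (p * M * σ).trace := by
      rw [Matrix.mul_add, trace_add, ← Matrix.mul_assoc, ← Matrix.mul_assoc,
        trace_mul_comm _ r, trace_mul_comm _ p, Matrix.mul_assoc p]
    _ = M'.trace + M''.trace := by
      rw [hI, ← hp, ← Matrix.mul_assoc, hrI, Matrix.one_mul, Matrix.mul_assoc, hpσ,
        Matrix.mul_one]

theorem prod_div_succ_mul {F : Type*} [CommGroupWithZero F] {n : ℕ} [NeZero n]
    {u : Fin n → F} (hu : ∀ i, u i ≠ 0) (f : Fin n → F) :
    ∏ i, u i / u (i + 1) * f i = ∏ i, f i := by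
  have hshift : ∏ i, u (i + 1) = ∏ i, u i := Equiv.prod_comp (Equiv.addRight 1) u
  rw [prod_mul_distrib, prod_div_distrib, hshift,
    div_self (prod_ne_zero_iff.2 fun i _ => hu i), one_mul]

end Paths

section Coefficients

variable {R : Type*} [CommSemiring R]

theorem coeff_C_mul_X_add_C_pow (u v : R) (a k : ℕ) :
    ((C u * X + C v) ^ a).coeff k = u ^ k * v ^ (a - k) * a.choose k := by
  have hcomp : (C u * X + C v) ^ a = ((X + C v) ^ a).comp (C u * X) := by simp
  rw [hcomp, comp_C_mul_X_coeff, coeff_X_add_C_pow]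
  ring

theorem coeff_C_mul_X_add_C_pow_add {F : Type*} [Field F] [CharZero F] (u v : F) (p t : ℕ) :
    ((C u * X + C v) ^ (p + t)).coeff p = (p + t)! * (u ^ p * v ^ t / (p ! * t !)) := by
  rw [coeff_C_mul_X_add_C_pow, Nat.add_sub_cancel_left, Nat.cast_add_choose]
  ring

theorem coeff_mul_eq_sum_fin {m n : ℕ} {p q : R[X]} (hp : p.natDegree < m)
    (hq : q.natDegree < n) (k : ℕ) :
    (p * q).coeff k = ∑ z : Fin m × Fin n,
      if k = (z.1 : ℕ) + z.2 then p.coeff z.1 * q.coeff z.2 else 0 := by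
  conv_lhs => rw [as_sum_range' p m hp, as_sum_range' q n hq]
  rw [sum_range, sum_range, Fintype.sum_mul_sum, ← Fintype.sum_prod_type', finsetSum_coeff]
  simp only [monomial_mul_monomial, coeff_monomial, eq_comm]

theorem sum_antidiagonal_eq_sum_Icc {M : Type*} [AddCommMonoid M] {L j a : ℕ} (ha : a ≤ L)
    {f : ℕ × ℕ → M} (hf : ∀ p q, a < p ∨ L - a < q → f (p, q) = 0) :
    ∑ x ∈ antidiagonal j, f x = ∑ s ∈ Icc (max 0 ((a : ℤ) - j)) (min (a : ℤ) (L - j)),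
      f ((a - s).toNat, (j - a + s).toNat) := by
  symm
  refine sum_of_injOn (fun s : ℤ => ((a - s).toNat, (j - a + s).toNat)) ?_ ?_ ?_ fun _ _ => rfl
  · intro s hs t ht h
    simp only [coe_Icc, Set.mem_Icc, Prod.mk.injEq] at hs ht h
    omega
  · intro s hs
    simp only [coe_Icc, Set.mem_Icc] at hs
    rw [mem_coe, HasAntidiagonal.mem_antidiagonal]
    dsimp only
    omega
  · rintro ⟨p, q⟩ hpq himage
    rw [HasAntidiagonal.mem_antidiagonal] at hpq
    refine hf p q ?_
    by_contra! hsmall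
    refine himage ⟨a - p, ?_, ?_⟩
    · simp only [coe_Icc, Set.mem_Icc]
      omega
    · simp only [Prod.mk.injEq]
      omega

end Coefficients

section SymmetricPower

variable {R : Type*} [CommRing R]

/-- The polynomial `(g₀₀ X + g₁₀)ᵃ (g₀₁ X + g₁₁)ⁿ⁻¹⁻ᵃ`: the image of the monomial `xᵃ yⁿ⁻¹⁻ᵃ`
under the substitution `g`, dehomogenized by `x = X`, `y = 1`. -/
noncomputable def symPowColumn (g : Matrix (Fin 2) (Fin 2) R) {n : ℕ} (a : Fin n) : R[X] :=
  (C (g 0 0) * X + C (g 1 0)) ^ (a : ℕ) * (C (g 0 1) * X + C (g 1 1)) ^ (a.rev : ℕ)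

/-- The matrix of `g` on the `n`-dimensional symmetric power `Symⁿ⁻¹(R²)` in the monomial basis.
Indexing by the dimension rather than the degree makes the case `n = 0` the zero module. -/
noncomputable def symPow (g : Matrix (Fin 2) (Fin 2) R) (n : ℕ) : Matrix (Fin n) (Fin n) R :=
  of fun j a => (symPowColumn g a).coeff j

theorem symPowColumn_succ (g : Matrix (Fin 2) (Fin 2) R) {n : ℕ} (a : Fin n) :
    symPowColumn g a.succ = (C (g 0 0) * X + C (g 1 0)) * symPowColumn g a := by
  simp only [symPowColumn, Fin.rev_succ, Fin.val_succ, Fin.val_castSucc]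
  ring

theorem symPowColumn_castSucc (g : Matrix (Fin 2) (Fin 2) R) {n : ℕ} (a : Fin n) :
    symPowColumn g a.castSucc = (C (g 0 1) * X + C (g 1 1)) * symPowColumn g a := by
  simp only [symPowColumn, Fin.rev_castSucc, Fin.val_succ, Fin.val_castSucc]
  ring

theorem natDegree_symPowColumn_lt (g : Matrix (Fin 2) (Fin 2) R) {n : ℕ} (a : Fin n) :
    (symPowColumn g a).natDegree < n := by
  have hdeg : (symPowColumn g a).natDegree ≤ a * 1 + a.rev * 1 :=
    natDegree_mul_le_of_le (natDegree_pow_le_of_le _ natDegree_linear_le)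
      (natDegree_pow_le_of_le _ natDegree_linear_le)
  rw [Fin.val_rev] at hdeg
  omega

theorem symPowColumn_mul (g : Matrix (Fin 2) (Fin 2) R) {A B : ℕ} (a : Fin (A + 1))
    (b : Fin (B + 1)) :
    symPowColumn g a * symPowColumn g b =
      symPowColumn g (⟨a + b, by omega⟩ : Fin (A + B + 1)) := by
  have hrev : A + B + 1 - (a + b + 1) = (A + 1 - (a + 1)) + (B + 1 - (b + 1)) := by omega
  simp only [symPowColumn, Fin.val_rev, hrev, pow_add]
  ring

variable (R) in
/-- Multiplication by `x` from forms of degree `n - 1` to forms of degree `n`. -/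
def mulXMatrix (n : ℕ) : Matrix (Fin (n + 1)) (Fin n) R :=
  (1 : Matrix (Fin (n + 1)) (Fin (n + 1)) R).submatrix id Fin.succ

variable (R) in
/-- Multiplication by `y` from forms of degree `n - 1` to forms of degree `n`. -/
def mulYMatrix (n : ℕ) : Matrix (Fin (n + 1)) (Fin n) R :=
  (1 : Matrix (Fin (n + 1)) (Fin (n + 1)) R).submatrix id Fin.castSucc

theorem mulXMatrix_mul_symPow_apply (g : Matrix (Fin 2) (Fin 2) R) {n : ℕ} (j : Fin (n + 1))
    (a : Fin n) : (mulXMatrix R n * symPow g n) j a = (X * symPowColumn g a).coeff j := by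
  rw [Matrix.mul_apply]
  cases j using Fin.cases <;>
    simp [mulXMatrix, symPow, one_apply, coeff_X_mul, (Fin.succ_ne_zero _).symm]

theorem mulYMatrix_mul_symPow_apply (g : Matrix (Fin 2) (Fin 2) R) {n : ℕ} (j : Fin (n + 1))
    (a : Fin n) : (mulYMatrix R n * symPow g n) j a = (symPowColumn g a).coeff j := by
  rw [Matrix.mul_apply]
  cases j using Fin.lastCases with
  | last =>
    simp [mulYMatrix, one_apply, (Fin.castSucc_ne_last _).symm,
      coeff_eq_zero_of_natDegree_lt (natDegree_symPowColumn_lt g a)]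
  | cast j => simp [mulYMatrix, symPow, one_apply]

theorem symPow_mul_mulXMatrix (g : Matrix (Fin 2) (Fin 2) R) (n : ℕ) :
    symPow g (n + 1) * mulXMatrix R n =
      (g 0 0 • mulXMatrix R n + g 1 0 • mulYMatrix R n) * symPow g n := by
  ext j a
  rw [Matrix.add_mul, Matrix.smul_mul, Matrix.smul_mul, Matrix.add_apply, Matrix.smul_apply,
    Matrix.smul_apply, mulXMatrix_mul_symPow_apply, mulYMatrix_mul_symPow_apply]
  simp [mulXMatrix, Matrix.mul_apply, one_apply, symPow, symPowColumn_succ, add_mul, mul_assoc]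

theorem symPow_mul_mulYMatrix (g : Matrix (Fin 2) (Fin 2) R) (n : ℕ) :
    symPow g (n + 1) * mulYMatrix R n =
      (g 0 1 • mulXMatrix R n + g 1 1 • mulYMatrix R n) * symPow g n := by
  ext j a
  rw [Matrix.add_mul, Matrix.smul_mul, Matrix.smul_mul, Matrix.add_apply, Matrix.smul_apply,
    Matrix.smul_apply, mulXMatrix_mul_symPow_apply, mulYMatrix_mul_symPow_apply]
  simp [mulYMatrix, Matrix.mul_apply, one_apply, symPow, symPowColumn_castSucc, add_mul,
    mul_assoc]

end SymmetricPower

section ClebschGordan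

variable (R : Type*) [CommRing R] (A B : ℕ)

/-- The inclusion of the lower summand of the Clebsch–Gordan decomposition: multiplication by
the invariant form `y ⊗ x - x ⊗ y`. -/
def cgInclusion : Matrix (Fin (A + 1) × Fin (B + 1)) (Fin A × Fin B) R :=
  mulYMatrix R A ⊗ₖ mulXMatrix R B - mulXMatrix R A ⊗ₖ mulYMatrix R B

/-- The projection to the top summand of the Clebsch–Gordan decomposition: multiplication of
forms, `xᵃ ⊗ xᵇ ↦ xᵃ⁺ᵇ`. -/
def cgProjection : Matrix (Fin (A + B + 1)) (Fin (A + 1) × Fin (B + 1)) R :=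
  of fun k x => if (k : ℕ) = x.1 + x.2 then 1 else 0

/-- A left inverse of `cgInclusion`, by partial sums along the antidiagonals. -/
def cgRetraction : Matrix (Fin A × Fin B) (Fin (A + 1) × Fin (B + 1)) R :=
  of fun y x => if (y.1 : ℕ) + y.2 + 1 = x.1 + x.2 ∧ (x.1 : ℕ) ≤ y.1 then 1 else 0

/-- A right inverse of `cgProjection`: the monomial of degree `k` is lifted to the pair of
exponents `(a, k - a)` with `a` as large as possible. -/
def cgSection : Matrix (Fin (A + 1) × Fin (B + 1)) (Fin (A + B + 1)) R :=
  (1 : Matrix (Fin (A + 1) × Fin (B + 1)) (Fin (A + 1) × Fin (B + 1)) R).submatrix id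
    fun k => (⟨min k A, by omega⟩, ⟨k - min (k : ℕ) A, by omega⟩)

variable {R A B}

theorem mul_cgInclusion_apply {ι : Type*} (M : Matrix ι (Fin (A + 1) × Fin (B + 1)) R) (x : ι)
    (y : Fin A × Fin B) : (M * cgInclusion R A B) x y =
      M x (y.1.castSucc, y.2.succ) - M x (y.1.succ, y.2.castSucc) := by
  simp [Matrix.mul_apply, cgInclusion, mulXMatrix, mulYMatrix, one_apply, mul_sub,
    Fintype.sum_prod_type]

theorem mul_cgSection_apply {ι : Type*} (M : Matrix ι (Fin (A + 1) × Fin (B + 1)) R) (x : ι)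
    (k : Fin (A + B + 1)) : (M * cgSection R A B) x k =
      M x (⟨min k A, by omega⟩, ⟨k - min (k : ℕ) A, by omega⟩) := by
  simp [Matrix.mul_apply, cgSection, one_apply]

theorem cgRetraction_mul_cgInclusion : cgRetraction R A B * cgInclusion R A B = 1 := by
  ext ⟨a, b⟩ ⟨c, d⟩
  rw [mul_cgInclusion_apply, one_apply]
  simp only [cgRetraction, of_apply, Fin.val_succ, Fin.val_castSucc, Prod.mk.injEq, Fin.ext_iff]
  split_ifs <;> first | omega | simp

theorem cgRetraction_mul_cgSection : cgRetraction R A B * cgSection R A B = 0 := by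
  ext ⟨a, b⟩ k
  rw [mul_cgSection_apply, cgRetraction, of_apply, if_neg (by grind), Matrix.zero_apply]

theorem cgProjection_mul_cgInclusion : cgProjection R A B * cgInclusion R A B = 0 := by
  ext k ⟨c, d⟩
  rw [mul_cgInclusion_apply]
  simp only [cgProjection, of_apply, Fin.val_succ, Fin.val_castSucc, Matrix.zero_apply]
  split_ifs <;> first | omega | simp

theorem cgProjection_mul_cgSection : cgProjection R A B * cgSection R A B = 1 := by
  ext k l
  rw [mul_cgSection_apply, one_apply]
  simp only [cgProjection, of_apply, Fin.ext_iff]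
  split_ifs <;> first | omega | simp

theorem cgInclusion_mul_cgRetraction_add_cgSection_mul_cgProjection :
    cgInclusion R A B * cgRetraction R A B + cgSection R A B * cgProjection R A B = 1 := by
  have hcard : Fintype.card ((Fin A × Fin B) ⊕ Fin (A + B + 1)) =
      Fintype.card (Fin (A + 1) × Fin (B + 1)) := by
    simp only [Fintype.card_sum, Fintype.card_prod, Fintype.card_fin]
    ring
  rw [← fromCols_mul_fromRows, mul_eq_one_comm_of_equiv (Fintype.equivOfCardEq hcard).symm,
    fromRows_mul_fromCols, cgRetraction_mul_cgInclusion, cgRetraction_mul_cgSection,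
    cgProjection_mul_cgInclusion, cgProjection_mul_cgSection, fromBlocks_one]

theorem kronecker_symPow_mul_cgInclusion (g : Matrix (Fin 2) (Fin 2) R) :
    (symPow g (A + 1) ⊗ₖ symPow g (B + 1)) * cgInclusion R A B =
      g.det • cgInclusion R A B * (symPow g A ⊗ₖ symPow g B) := by
  rw [cgInclusion, Matrix.mul_sub, ← mul_kronecker_mul, ← mul_kronecker_mul,
    symPow_mul_mulXMatrix, symPow_mul_mulXMatrix, symPow_mul_mulYMatrix, symPow_mul_mulYMatrix,
    mul_kronecker_mul, mul_kronecker_mul, ← Matrix.sub_mul]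
  congr 1
  simp only [add_kronecker, kronecker_add, smul_kronecker, kronecker_smul, det_fin_two]
  module

theorem symPow_mul_cgProjection (g : Matrix (Fin 2) (Fin 2) R) :
    symPow g (A + B + 1) * cgProjection R A B =
      cgProjection R A B * (symPow g (A + 1) ⊗ₖ symPow g (B + 1)) := by
  ext k ⟨a, b⟩
  have hleft : (symPow g (A + B + 1) * cgProjection R A B) k (a, b) =
      (symPowColumn g (⟨a + b, by omega⟩ : Fin (A + B + 1))).coeff k := by
    rw [Matrix.mul_apply, sum_eq_single ⟨a + b, by omega⟩] <;>
      simp +contextual [cgProjection, symPow, Fin.ext_iff]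
  rw [hleft, ← symPowColumn_mul, coeff_mul_eq_sum_fin (natDegree_symPowColumn_lt g a)
    (natDegree_symPowColumn_lt g b), Matrix.mul_apply]
  simp [cgProjection, symPow]

variable (w : ℕ → R)

theorem diagonal_mul_cgInclusion :
    diagonal (fun x : Fin (A + 1) × Fin (B + 1) => w (x.1 + x.2)) * cgInclusion R A B =
      cgInclusion R A B * diagonal (fun y : Fin A × Fin B => w (y.1 + y.2 + 1)) := by
  ext ⟨a, b⟩ ⟨c, d⟩
  rw [diagonal_mul, mul_diagonal]
  simp only [cgInclusion, mulXMatrix, mulYMatrix, Matrix.sub_apply, kroneckerMap_apply,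
    submatrix_apply, id, one_apply, Fin.ext_iff, Fin.val_succ, Fin.val_castSucc]
  grind

theorem diagonal_mul_cgProjection :
    diagonal (fun k : Fin (A + B + 1) => w k) * cgProjection R A B =
      cgProjection R A B *
        diagonal (fun x : Fin (A + 1) × Fin (B + 1) => w (x.1 + x.2)) := by
  ext k x
  rw [diagonal_mul, mul_diagonal]
  by_cases h : (k : ℕ) = x.1 + x.2 <;> simp [cgProjection, h]

end ClebschGordan

section WeightedTrace

variable {R : Type*} [CommRing R] {n : ℕ}

/-- The trace of the product over `i` of `g i` acting on the `N`-dimensional symmetric power,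
with the `j`-th weight space rescaled by `w i j` before each factor. -/
noncomputable def symPowTrace (w : Fin n → ℕ → R) (g : Fin n → Matrix (Fin 2) (Fin 2) R)
    (N : ℕ) : R :=
  (List.ofFn fun i => diagonal (fun j : Fin N => w i j) * symPow (g i) N).prod.trace

/-- The analogue of `symPowTrace` on the tensor product of the `A`- and `B`-dimensional
symmetric powers, whose weight is the sum of the two weights. -/
noncomputable def tensorTrace (w : Fin n → ℕ → R) (g : Fin n → Matrix (Fin 2) (Fin 2) R)
    (A B : ℕ) : R :=
  (List.ofFn fun i => diagonal (fun x : Fin A × Fin B => w i (x.1 + x.2)) *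
    (symPow (g i) A ⊗ₖ symPow (g i) B)).prod.trace

variable (w : Fin n → ℕ → R) (g : Fin n → Matrix (Fin 2) (Fin 2) R) (A B : ℕ)

theorem tensorTrace_succ_succ :
    tensorTrace w g (A + 1) (B + 1) =
      tensorTrace (fun i j => (g i).det * w i (j + 1)) g A B + symPowTrace w g (A + B + 1) := by
  refine trace_eq_add_of_split_exact cgRetraction_mul_cgInclusion cgProjection_mul_cgSection
    cgInclusion_mul_cgRetraction_add_cgSection_mul_cgProjection
    (prod_ofFn_mul_of_intertwines fun i => ?_)
    (prod_ofFn_mul_of_intertwines fun i => ?_)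
  · rw [Matrix.mul_assoc, kronecker_symPow_mul_cgInclusion, ← Matrix.mul_assoc, Matrix.mul_smul,
      diagonal_mul_cgInclusion, ← Matrix.mul_smul, ← diagonal_smul, Matrix.mul_assoc]
    rfl
  · rw [Matrix.mul_assoc, symPow_mul_cgProjection, ← Matrix.mul_assoc, diagonal_mul_cgProjection,
      Matrix.mul_assoc]

theorem tensorTrace_eq_sum_symPowTrace :
    tensorTrace w g A B = ∑ k ∈ range (min A B),
      symPowTrace (fun i j => (g i).det ^ k * w i (j + k)) g (A + B - 1 - 2 * k) := by
  induction A generalizing w B with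
  | zero => simp [tensorTrace]
  | succ A ih =>
    cases B with
    | zero => simp [tensorTrace]
    | succ B =>
      rw [tensorTrace_succ_succ, ih, Nat.add_min_add_right, sum_range_succ']
      congr 1
      · refine sum_congr rfl fun k _ => ?_
        congr 1
        · ext i j
          rw [pow_succ, mul_assoc, add_assoc]
        · omega
      · simp [Nat.add_right_comm]

variable [NeZero n]

theorem symPowTrace_eq_sum (N : ℕ) :
    symPowTrace w g N = ∑ e : Fin n → Fin N, ∏ i,
      w i (e i) * symPow (g i) N (e i) (e (i + 1)) := by
  simp only [symPowTrace, trace_prod_ofFn, diagonal_mul]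

theorem tensorTrace_eq_sum :
    tensorTrace w g A B = ∑ a : Fin n → Fin A, ∑ b : Fin n → Fin B, ∏ i,
      w i (a i + b i) *
        (symPow (g i) A (a i) (a (i + 1)) * symPow (g i) B (b i) (b (i + 1))) := by
  rw [tensorTrace, trace_prod_ofFn,
    ← (Equiv.arrowProdEquivProdArrow (Fin n) (fun _ => Fin A) fun _ => Fin B).symm.sum_comp,
    Fintype.sum_prod_type]
  simp only [diagonal_mul]
  rfl

end WeightedTrace

section Wigner

/-- The rotation of the plane through the angle `θ / 2`, on whose symmetric powers the Wigner
matrices are realized. -/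
noncomputable def halfAngleRotation (θ : ℝ) : Matrix (Fin 2) (Fin 2) ℝ :=
  !![Real.cos (θ / 2), -Real.sin (θ / 2); Real.sin (θ / 2), Real.cos (θ / 2)]

theorem det_halfAngleRotation (θ : ℝ) : (halfAngleRotation θ).det = 1 := by
  rw [halfAngleRotation, det_fin_two_of, ← Real.cos_sq_add_sin_sq (θ / 2)]
  ring

/-- The alternating sum in Wigner's formula for `d^ℓ_{m,n}(θ)`, in terms of `L = 2ℓ`,
`j = ℓ + m` and `a = ℓ + n`. -/
noncomputable def wignerSum (L j a : ℤ) (θ : ℝ) : ℝ :=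
  ∑ s ∈ Icc (max 0 (a - j)) (min a (L - j)),
    (-1 : ℝ) ^ (j - a + s) * Real.cos (θ / 2) ^ (L + (a - j) - 2 * s) *
      Real.sin (θ / 2) ^ (j - a + 2 * s) /
      (((a - s).toNat ! * s.toNat ! * (j - a + s).toNat ! * (L - j - s).toNat ! : ℕ) : ℝ)

theorem wignerd_eq_sqrt_mul_wignerSum {L j a : ℤ} (hj : 0 ≤ j) (hjL : j ≤ L) (ha : 0 ≤ a)
    (haL : a ≤ L) (θ : ℝ) :
    wignerd L (2 * j - L) (2 * a - L) θ =
      √((j.toNat ! * (L - j).toNat ! * a.toNat ! * (L - a).toNat ! : ℕ) : ℝ) *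
        wignerSum L j a θ := by
  have hplus (k : ℤ) : (L + (2 * k - L)) / 2 = k := by omega
  have hminus (k : ℤ) : (L - (2 * k - L)) / 2 = L - k := by omega
  have hdiff (k l : ℤ) : ((2 * k - L) - (2 * l - L)) / 2 = k - l := by omega
  rw [wignerd, if_pos ⟨abs_le.2 (by omega), abs_le.2 (by omega)⟩]
  simp only [hplus, hminus, hdiff]
  rfl

theorem wignerSum_sub_sub (L j a : ℤ) (θ : ℝ) :
    wignerSum L (L - j) (L - a) θ = (-1) ^ (j - a) * wignerSum L j a θ := by
  rw [wignerSum, wignerSum, mul_sum]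
  refine sum_nbij' (fun s => s - (j - a)) (fun s => s + (j - a))
    (fun s hs => by simp only [mem_Icc] at *; omega)
    (fun s hs => by simp only [mem_Icc] at *; omega)
    (fun s _ => by ring) (fun s _ => by ring) fun s _ => ?_
  have hsign : (-1 : ℝ) ^ (L - j - (L - a) + s) =
      (-1) ^ (j - a) * (-1) ^ (j - a + (s - (j - a))) := by
    rw [← zpow_add₀ (by norm_num),
      show j - a + (j - a + (s - (j - a))) = L - j - (L - a) + s + 2 * (j - a) by ring,
      zpow_add₀ (by norm_num) _ (2 * (j - a)), (even_two_mul _).neg_one_zpow, mul_one]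
  rw [hsign]
  ring_nf

theorem wignerd_neg_neg {L M N : ℤ} (hM : (M - L) % 2 = 0) (hN : (N - L) % 2 = 0) (θ : ℝ) :
    wignerd L (-M) (-N) θ = (-1) ^ ((M - N) / 2) * wignerd L M N θ := by
  by_cases h : |M| ≤ L ∧ |N| ≤ L
  · obtain ⟨j, rfl⟩ : ∃ j, M = 2 * j - L := ⟨(M + L) / 2, by omega⟩
    obtain ⟨a, rfl⟩ : ∃ a, N = 2 * a - L := ⟨(N + L) / 2, by omega⟩
    simp only [abs_le] at h
    rw [show -(2 * j - L) = 2 * (L - j) - L by ring, show -(2 * a - L) = 2 * (L - a) - L by ring,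
      wignerd_eq_sqrt_mul_wignerSum (by omega) (by omega) (by omega) (by omega),
      wignerd_eq_sqrt_mul_wignerSum (by omega) (by omega) (by omega) (by omega),
      wignerSum_sub_sub, show (2 * j - L - (2 * a - L)) / 2 = j - a by omega, sub_sub_cancel,
      sub_sub_cancel]
    ring_nf
  · rw [wignerd, wignerd, abs_neg, abs_neg, if_neg h, if_neg h, mul_zero]

theorem symPow_halfAngleRotation_apply {L : ℕ} (θ : ℝ) (j a : Fin (L + 1)) :
    symPow (halfAngleRotation θ) (L + 1) j a =
      ((a : ℕ)! * (a.rev : ℕ)! : ℕ) * wignerSum L j a θ := by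
  have hrev : (a.rev : ℕ) = L - a := by rw [Fin.val_rev]; omega
  rw [symPow, of_apply, symPowColumn, Polynomial.coeff_mul, hrev,
    sum_antidiagonal_eq_sum_Icc (Fin.is_le a) fun p q hlarge => by
      simp only [coeff_C_mul_X_add_C_pow]
      rcases hlarge with h | h <;>
        simp only [Nat.choose_eq_zero_of_lt h, Nat.cast_zero, mul_zero, zero_mul],
    wignerSum, mul_sum]
  refine sum_congr rfl fun s hs => ?_
  rw [mem_Icc] at hs
  obtain ⟨t, rfl⟩ := Int.eq_ofNat_of_zero_le (show 0 ≤ s by omega)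
  obtain ⟨p, hp⟩ := Int.eq_ofNat_of_zero_le (show 0 ≤ (a : ℤ) - t by omega)
  obtain ⟨q, hq⟩ := Int.eq_ofNat_of_zero_le (show 0 ≤ (j : ℤ) - a + t by omega)
  obtain ⟨r, hr⟩ := Int.eq_ofNat_of_zero_le (show 0 ≤ (L : ℤ) - j - t by omega)
  rw [show (L : ℤ) + (a - j) - 2 * t = (p + r : ℕ) by omega,
    show (j : ℤ) - a + 2 * t = (q + t : ℕ) by omega, hp, hq, hr,
    show L - (a : ℕ) = q + r by omega, show (a : ℕ) = p + t by omega]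
  simp only [Int.toNat_natCast, zpow_natCast]
  rw [coeff_C_mul_X_add_C_pow_add, coeff_C_mul_X_add_C_pow_add]
  simp only [halfAngleRotation, of_apply, cons_val', cons_val_zero, cons_val_one]
  rw [neg_pow]
  push_cast
  ring

/-- The norm `√(j! (n-1-j)!)` of the `j`-th monomial, up to a common factor, for the rotation
invariant inner product on the `n`-dimensional symmetric power. -/
noncomputable def monomialNorm {n : ℕ} (j : Fin n) : ℝ := √((j : ℕ)! * (j.rev : ℕ)! : ℕ)

theorem monomialNorm_ne_zero {n : ℕ} (j : Fin n) : monomialNorm j ≠ 0 :=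
  (Real.sqrt_pos.2 (by positivity)).ne'

theorem wignerd_eq_symPow {L : ℕ} (j a : Fin (L + 1)) (θ : ℝ) :
    wignerd L (2 * j - L) (2 * a - L) θ =
      monomialNorm j / monomialNorm a * symPow (halfAngleRotation θ) (L + 1) j a := by
  have hrev (k : Fin (L + 1)) : ((L : ℤ) - k).toNat = k.rev := by rw [Fin.val_rev]; omega
  have hsq : (((a : ℕ)! * (a.rev : ℕ)! : ℕ) : ℝ) = monomialNorm a ^ 2 :=
    (Real.sq_sqrt (Nat.cast_nonneg _)).symm
  rw [wignerd_eq_sqrt_mul_wignerSum (by omega) (by omega) (by omega) (by omega), hrev, hrev,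
    Int.toNat_natCast, Int.toNat_natCast, mul_assoc, Nat.cast_mul,
    Real.sqrt_mul (Nat.cast_nonneg _), ← monomialNorm, ← monomialNorm,
    symPow_halfAngleRotation_apply, hsq]
  field_simp [monomialNorm_ne_zero a]

theorem wignerd_neg_neg_eq_symPow {L : ℕ} (j a : Fin (L + 1)) (θ : ℝ) :
    wignerd L (-(2 * j - L)) (-(2 * a - L)) θ =
      (-1) ^ (j : ℕ) * monomialNorm j / ((-1) ^ (a : ℕ) * monomialNorm a) *
        symPow (halfAngleRotation θ) (L + 1) j a := by
  rw [wignerd_neg_neg (by omega) (by omega), wignerd_eq_symPow,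
    show (2 * (j : ℤ) - L - (2 * a - L)) / 2 = j - a by omega, zpow_sub₀ (by norm_num),
    zpow_natCast, zpow_natCast]
  ring

/-- The indicator of the weight `M / 2` among the weights `j - L / 2`, `0 ≤ j ≤ L`. -/
def weightIndicator (L : ℕ) (M : ℤ) (j : ℕ) : ℝ :=
  if 2 * (j : ℤ) - L = M then 1 else 0

theorem weightIndicator_add {L k : ℕ} (hk : 2 * k ≤ L) (M : ℤ) (j : ℕ) :
    weightIndicator L M (j + k) = weightIndicator (L - 2 * k) M j := by
  simp only [weightIndicator]
  congr 1
  push_cast [hk]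
  simp only [eq_iff_iff]
  omega

theorem weightIndicator_add_add (L K : ℕ) (M : ℤ) (a b : ℕ) :
    weightIndicator (L + K) M (a + b) = weightIndicator K (-(2 * a - L) + M) b := by
  simp only [weightIndicator]
  congr 1
  push_cast
  simp only [eq_iff_iff]
  omega

variable {n : ℕ} [NeZero n] (θ : Fin n → ℝ) {D : Fin n → ℤ}

theorem sum_prod_weightIndicator_mul_wignerd {L : ℕ} (hD : ∀ i, (D i - L) % 2 = 0) :
    ∑ b : Fin n → Fin (L + 1), ∏ i, weightIndicator L (D i) (b i) *
        wignerd L (2 * (b i : ℤ) - L) (2 * (b (i + 1) : ℤ) - L) (θ i) =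
      ∏ i, wignerd L (D i) (D (i + 1)) (θ i) := by
  by_cases hrange : ∀ i, |D i| ≤ L
  · have hindex (i : Fin n) : ∃ b : Fin (L + 1), 2 * (b : ℤ) - L = D i := by
      have := abs_le.1 (hrange i)
      have := hD i
      exact ⟨⟨((D i + L) / 2).toNat, by omega⟩, by dsimp only; omega⟩
    choose b hb using hindex
    rw [Fintype.sum_eq_single b]
    · simp [weightIndicator, hb]
    · intro c hc
      obtain ⟨i, hi⟩ := Function.ne_iff.1 hc
      refine prod_eq_zero (mem_univ i) ?_
      rw [weightIndicator, if_neg (by have := hb i; omega), zero_mul]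
  · push Not at hrange
    obtain ⟨i, hi⟩ := hrange
    have hvanish : wignerd L (D i) (D (i + 1)) (θ i) = 0 := if_neg fun h => hi.not_ge h.1
    rw [prod_eq_zero (mem_univ i) hvanish]
    refine sum_eq_zero fun c _ => prod_eq_zero (mem_univ i) ?_
    rw [weightIndicator, if_neg (by rw [lt_abs] at hi; omega), zero_mul]

theorem symPowTrace_weightIndicator {L : ℕ} (hD : ∀ i, (D i - L) % 2 = 0) :
    symPowTrace (fun i => weightIndicator L (D i)) (fun i => halfAngleRotation (θ i)) (L + 1) =
      ∏ i, wignerd L (D i) (D (i + 1)) (θ i) := by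
  rw [← sum_prod_weightIndicator_mul_wignerd θ hD, symPowTrace_eq_sum]
  refine sum_congr rfl fun b _ => ?_
  rw [← prod_div_succ_mul fun i => monomialNorm_ne_zero (b i)]
  refine prod_congr rfl fun i _ => ?_
  rw [wignerd_eq_symPow]
  ring

theorem sum_prod_wignerd_mul_wignerd {L K : ℕ} (hD : ∀ i, (D i - (L + K)) % 2 = 0) :
    ∑ e : Fin n → Fin (L + 1), ∏ i,
      (wignerd L (-L + 2 * (e i : ℤ)) (-L + 2 * (e (i + 1) : ℤ)) (θ i) *
        wignerd K (-L + 2 * (e i : ℤ) + D i) (-L + 2 * (e (i + 1) : ℤ) + D (i + 1)) (θ i)) =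
      tensorTrace (fun i => weightIndicator (L + K) (D i)) (fun i => halfAngleRotation (θ i))
        (L + 1) (K + 1) := by
  -- Reversing `e` negates the first magnetic index, so that the two weights add up to `D`.
  rw [tensorTrace_eq_sum,
    ← (Equiv.piCongrRight fun _ : Fin n => Fin.revPerm (n := L + 1)).sum_comp]
  refine sum_congr rfl fun a _ => ?_
  have hrev (k : Fin (L + 1)) : -(L : ℤ) + 2 * (k.rev : ℕ) = -(2 * k - L) := by
    rw [Fin.val_rev]
    omega
  simp only [Equiv.piCongrRight_apply, Pi.map_apply, Fin.revPerm_apply, hrev]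
  rw [prod_mul_distrib, ← sum_prod_weightIndicator_mul_wignerd θ
    (D := fun i => -(2 * (a i : ℤ) - L) + D i) (fun i => by have := hD i; omega), mul_sum]
  refine sum_congr rfl fun b _ => ?_
  have hne (i : Fin n) : (-1) ^ (a i : ℕ) * monomialNorm (a i) * monomialNorm (b i) ≠ 0 :=
    mul_ne_zero (mul_ne_zero (pow_ne_zero _ (by norm_num)) (monomialNorm_ne_zero _))
      (monomialNorm_ne_zero _)
  rw [← prod_mul_distrib]
  refine Eq.trans (prod_congr rfl fun i _ => ?_) (prod_div_succ_mul hne _)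
  rw [wignerd_neg_neg_eq_symPow, wignerd_eq_symPow, weightIndicator_add_add, mul_div_mul_comm]
  ring

theorem tensorTrace_weightIndicator (L K : ℕ) (hD : ∀ i, (D i - (L + K)) % 2 = 0) :
    tensorTrace (fun i => weightIndicator (L + K) (D i)) (fun i => halfAngleRotation (θ i))
        (L + 1) (K + 1) =
      ∑ k ∈ range (min L K + 1), ∏ i,
        wignerd (L + K - 2 * k) (D i) (D (i + 1)) (θ i) := by
  rw [tensorTrace_eq_sum_symPowTrace, Nat.add_min_add_right]
  refine sum_congr rfl fun k hk => ?_
  have hkL : 2 * k ≤ L + K := by rw [mem_range] at hk; omega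
  have hspin : (L : ℤ) + K - 2 * k = (L + K - 2 * k : ℕ) := by omega
  rw [hspin, ← symPowTrace_weightIndicator θ fun i => by have := hD i; omega,
    show L + 1 + (K + 1) - 1 - 2 * k = L + K - 2 * k + 1 by omega]
  simp only [det_halfAngleRotation, one_pow, one_mul, weightIndicator_add hkL]

end Wigner

/-- Composite rule for Wigner d-matrices, general cyclic case with `n ≥ 1` vertices
(doubled indices: `L₁ = 2ℓ₁`, `L₂ = 2ℓ₂`, `D i = 2Δᵢ`; the magnetic indices
`εᵢ ∈ {-ℓ₁, …, ℓ₁}` are encoded as `-L₁ + 2 (e i)` with `e i ∈ {0, …, L₁}`, the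
recoupled spin `s ∈ {|ℓ₁-ℓ₂|, …, ℓ₁+ℓ₂}` as `|L₁-L₂| + 2k`, and `i + 1` is taken
cyclically in `Fin n`):
`∑_{ε} ∏ᵢ d^{ℓ₁}_{εᵢ,εᵢ₊₁}(θᵢ) d^{ℓ₂}_{εᵢ+Δᵢ,εᵢ₊₁+Δᵢ₊₁}(θᵢ)
  = ∑_s ∏ᵢ d^s_{Δᵢ,Δᵢ₊₁}(θᵢ)`. -/
theorem wignerd_composite_rule_cyclic
    (n : ℕ) [NeZero n]
    (L₁ L₂ : ℤ) (hL₁ : 0 ≤ L₁) (hL₂ : 0 ≤ L₂)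
    (θ : Fin n → ℝ) (D : Fin n → ℤ)
    (hD : ∀ i : Fin n, (D i - (L₁ + L₂)) % 2 = 0) :
    ∑ e : Fin n → Fin (L₁.toNat + 1), ∏ i : Fin n,
      (wignerd L₁ (-L₁ + 2 * (e i : ℤ)) (-L₁ + 2 * (e (i + 1) : ℤ)) (θ i) *
        wignerd L₂ (-L₁ + 2 * (e i : ℤ) + D i) (-L₁ + 2 * (e (i + 1) : ℤ) + D (i + 1))
          (θ i))
      = ∑ k ∈ Finset.range ((min L₁ L₂).toNat + 1), ∏ i : Fin n,
          wignerd (|L₁ - L₂| + 2 * k) (D i) (D (i + 1)) (θ i) := by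
  lift L₁ to ℕ using hL₁
  lift L₂ to ℕ using hL₂
  have hmin : (min (L₁ : ℤ) L₂).toNat = min L₁ L₂ := by omega
  rw [Int.toNat_natCast, hmin, sum_prod_wignerd_mul_wignerd θ hD,
    tensorTrace_weightIndicator θ L₁ L₂ hD, ← sum_flip]
  refine sum_congr rfl fun k hk => ?_
  have hspin : (L₁ : ℤ) + L₂ - 2 * (min L₁ L₂ - k : ℕ) = |(L₁ : ℤ) - L₂| + 2 * k := by
    rw [mem_range] at hk
    rcases abs_cases ((L₁ : ℤ) - L₂) with h | h <;> omega
  rw [hspin]
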